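/- Let $G$ be an elementary abelian group of order $p^n$, $p$ odd, and let $\mathrm{Aut}(G) = GL_n(\mathbb{F}_p)$ act diagonally on $\widehat{G} \oplus \mathrm{Alt}(G)$ (dual space plus alternating bilinear forms). Then the number of orbits of this action is $\lfloor (3n+2)/2 \rfloor$. -/

import Mathlib

namespace Orb

abbrev M (K : Type) (r m : ℕ) : Type := (Fin r → K × K) × (Fin m → K)

variable {K : Type} [Field K]

/-- The standard alternating form. -/
def std (r m : ℕ) : M K r m →ₗ[K] M K r m →ₗ[K] K :=
  LinearMap.mk₂ K (fun x y => ∑ i, ((x.1 i).1 * (y.1 i).2 - (x.1 i).2 * (y.1 i).1))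
    (by intro x y z; rw [← Finset.sum_add_distrib]; refine Finset.sum_congr rfl fun i _ => ?_
        simp; ring)
    (by intro c x z; rw [smul_eq_mul, Finset.mul_sum]; refine Finset.sum_congr rfl fun i _ => ?_
        simp; ring)
    (by intro x y z; rw [← Finset.sum_add_distrib]; refine Finset.sum_congr rfl fun i _ => ?_
        simp; ring)
    (by intro c x z; rw [smul_eq_mul, Finset.mul_sum]; refine Finset.sum_congr rfl fun i _ => ?_
        simp; ring)

theorem std_apply (r m : ℕ) (x y : M K r m) :
    std r m x y = ∑ i, ((x.1 i).1 * (y.1 i).2 - (x.1 i).2 * (y.1 i).1) := rfl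

theorem std_alt (r m : ℕ) (x : M K r m) : std r m x x = 0 := by
  rw [std_apply]; refine Finset.sum_eq_zero fun i _ => ?_; ring

/-- functional of state 1 -/
def chi1 (r m : ℕ) : M K (r+1) m →ₗ[K] K where
  toFun x := (x.1 0).1
  map_add' _ _ := rfl
  map_smul' _ _ := rfl

/-- functional of state 2 -/
def chi2 (r m : ℕ) : M K r (m+1) →ₗ[K] K where
  toFun x := x.2 0
  map_add' _ _ := rfl
  map_smul' _ _ := rfl

theorem mem_ker_std (r m : ℕ) (x : M K r m) : x ∈ LinearMap.ker (std (K := K) r m) ↔ x.1 = 0 := by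
  rw [LinearMap.mem_ker]
  constructor
  · intro h
    have key : ∀ i, ∀ a b : K, (x.1 i).1 * b - (x.1 i).2 * a = 0 := by
      intro i a b
      have := congrArg (fun f => f ((Pi.single i (a, b), 0) : M K r m)) h
      simp only [std_apply, LinearMap.zero_apply] at this
      rw [Finset.sum_eq_single i] at this
      · simpa using this
      · intro j _ hj; simp [Pi.single_eq_of_ne hj]
      · simp
    funext i
    have h1 := key i 0 1
    have h2 := key i 1 0
    ext <;> simp_all
  · intro h
    ext y <;> simp [std_apply, h]

theorem finrank_ker_std (r m : ℕ) :
    Module.finrank K (LinearMap.ker (std (K := K) r m)) = m := by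
  have : LinearMap.ker (std (K := K) r m) = LinearMap.range (LinearMap.inr K (Fin r → K × K) (Fin m → K)) := by
    ext x
    rw [mem_ker_std, LinearMap.mem_range]
    constructor
    · intro h; exact ⟨x.2, by ext <;> simp [h]⟩
    · rintro ⟨y, rfl⟩; rfl
  rw [this, LinearMap.finrank_range_of_inj LinearMap.inr_injective]
  simp

theorem finrank_M (r m : ℕ) : Module.finrank K (M K r m) = 2 * r + m := by
  simp [Module.finrank_prod, Module.finrank_pi_fintype]; ring

section
variable {V : Type} [AddCommGroup V] [Module K V]

theorem skew (B : V →ₗ[K] V →ₗ[K] K) (hB : ∀ v, B v v = 0) (x y : V) : B x y = - B y x := by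
  have := hB (x + y)
  simp only [map_add, LinearMap.add_apply, hB] at this
  linear_combination this

theorem hyp (B : V →ₗ[K] V →ₗ[K] K) (hB : ∀ v, B v v = 0) (u w : V) (huw : B u w = 1)
    (r m : ℕ) (e : (LinearMap.ker (B u) ⊓ LinearMap.ker (B w) : Submodule K V) ≃ₗ[K] M K r m)
    (he : ∀ x y : (LinearMap.ker (B u) ⊓ LinearMap.ker (B w) : Submodule K V), B (x : V) (y : V) = std r m (e x) (e y)) :
    ∃ e' : V ≃ₗ[K] M K (r+1) m, (∀ x y, B x y = std (r+1) m (e' x) (e' y)) ∧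
      ∀ x, (e' x).1 0 = (B x w, B u x) := by
  have hwu : B w u = -1 := by rw [skew B hB, huw]
  let pr : V →ₗ[K] V := LinearMap.id - (B.flip w).smulRight u - (B u).smulRight w
  have hpr : ∀ x, pr x = x - B x w • u - B u x • w := fun x => rfl
  let pU : V →ₗ[K] (LinearMap.ker (B u) ⊓ LinearMap.ker (B w) : Submodule K V) :=
    pr.codRestrict _ (by
      intro x
      simp only [Submodule.mem_inf, LinearMap.mem_ker, hpr, map_sub, map_smul, smul_eq_mul, hB, huw, hwu]
      rw [skew B hB w x]
      constructor <;> ring)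
  have hpU : ∀ x, ((pU x : V)) = x - B x w • u - B u x • w := fun x => rfl
  let F : V →ₗ[K] M K (r+1) m :=
    { toFun := fun x => (Fin.cons (B x w, B u x) (e (pU x)).1, (e (pU x)).2)
      map_add' := by
        intro x y
        refine Prod.ext ?_ ?_
        · funext i; refine Fin.cases ?_ (fun j => ?_) i <;> simp
        · simp
      map_smul' := by
        intro c x
        refine Prod.ext ?_ ?_
        · funext i; refine Fin.cases ?_ (fun j => ?_) i <;> simp
        · simp }
  have hF : ∀ x, F x = (Fin.cons (B x w, B u x) (e (pU x)).1, (e (pU x)).2) := fun x => rfl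
  have hbij : Function.Bijective F := by
    constructor
    · rw [injective_iff_map_eq_zero]
      intro x hx
      rw [hF] at hx
      have h1 := congrFun (congrArg Prod.fst hx) 0
      have h2 : e (pU x) = 0 := by
        have hx2 := congrArg Prod.snd hx
        refine Prod.ext ?_ hx2
        funext j
        have := congrFun (congrArg Prod.fst hx) j.succ
        simpa using this
      have h3 : pU x = 0 := by simpa using h2
      have h4 := hpU x
      rw [h3] at h4
      simp at h1
      simp [h1.1, h1.2] at h4
      exact h4.symm
    · rintro ⟨f, g⟩
      let z := e.symm (Fin.tail f, g)
      have hz := z.2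
      simp only [Submodule.mem_inf, LinearMap.mem_ker] at hz
      have hzw : B z w = 0 := by rw [skew B hB, hz.2, neg_zero]
      refine ⟨(f 0).1 • u + (f 0).2 • w + z, ?_⟩
      have h1 : B ((f 0).1 • u + (f 0).2 • w + z) w = (f 0).1 := by
        simp [hB, huw, hzw]
      have h2 : B u ((f 0).1 • u + (f 0).2 • w + z) = (f 0).2 := by
        simp [hB, huw, hz.1]
      have h3 : pU ((f 0).1 • u + (f 0).2 • w + z) = z := by
        apply Subtype.ext
        rw [hpU, h1, h2]; abel
      rw [hF, h1, h2, h3]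
      simp only [z, LinearEquiv.apply_symm_apply]
      refine Prod.ext ?_ rfl
      exact Fin.cons_self_tail f
  refine ⟨LinearEquiv.ofBijective F hbij, ?_, fun x => rfl⟩
  intro x y
  simp only [LinearEquiv.ofBijective_apply]
  have h := he (pU x) (pU y)
  rw [std_apply] at h ⊢
  rw [Fin.sum_univ_succ]
  simp only [hF, Fin.cons_zero, Fin.cons_succ]
  rw [← h, hpU, hpU]
  simp only [map_sub, map_smul, LinearMap.sub_apply, LinearMap.smul_apply, smul_eq_mul, hB, huw, hwu]
  rw [skew B hB w y, skew B hB x u]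
  ring

theorem exists_pair (B : V →ₗ[K] V →ₗ[K] K) (h : B ≠ 0) : ∃ u w, B u w = 1 := by
  by_contra! hc
  apply h
  ext u w
  by_contra hne
  apply hc u ((B u w)⁻¹ • w)
  simpa using inv_mul_cancel₀ hne

end

theorem exists_std (n : ℕ) : ∀ (V : Type) [AddCommGroup V] [Module K V] [Module.Finite K V]
    (B : V →ₗ[K] V →ₗ[K] K) (_ : ∀ v, B v v = 0) (_ : Module.finrank K V = n),
    ∃ r m, ∃ e : V ≃ₗ[K] M K r m, ∀ x y, B x y = std r m (e x) (e y) := by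
  induction n using Nat.strong_induction_on with
  | _ n ih =>
    intro V _ _ _ B hB hn
    by_cases h0 : B = 0
    · refine ⟨0, n, LinearEquiv.ofFinrankEq _ _ (by rw [finrank_M, hn]; simp), ?_⟩
      intro x y; simp [h0, std_apply]
    · obtain ⟨u, w, huw⟩ := exists_pair B h0
      let U : Submodule K V := LinearMap.ker (B u) ⊓ LinearMap.ker (B w)
      have hlt : Module.finrank K U < n := by
        rw [← hn]
        apply Submodule.finrank_lt
        intro htop
        have : w ∈ U := by rw [htop]; trivial
        have := this.1
        simp [huw] at this
      obtain ⟨r, m, e, he⟩ := ih _ hlt U (B.compl₁₂ U.subtype U.subtype) (fun v => hB _) rfl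
      obtain ⟨e', he', -⟩ := hyp B hB u w huw r m e he
      exact ⟨r+1, m, e', he'⟩

section
variable {V : Type} [AddCommGroup V] [Module K V] [Module.Finite K V]

theorem exists_nf (B : V →ₗ[K] V →ₗ[K] K) (hB : ∀ v, B v v = 0) (χ : V →ₗ[K] K) :
    (∃ r m, ∃ e : V ≃ₗ[K] M K r m, (∀ x y, B x y = std r m (e x) (e y)) ∧ χ = 0) ∨
    (∃ r m, ∃ e : V ≃ₗ[K] M K (r+1) m, (∀ x y, B x y = std (r+1) m (e x) (e y)) ∧
      ∀ x, χ x = chi1 r m (e x)) ∨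
    (∃ r m, ∃ e : V ≃ₗ[K] M K r (m+1), (∀ x y, B x y = std r (m+1) (e x) (e y)) ∧
      ∀ x, χ x = chi2 r m (e x)) := by
  by_cases h0 : χ = 0
  · left
    obtain ⟨r, m, e, he⟩ := exists_std _ V B hB rfl
    exact ⟨r, m, e, he, h0⟩
  right
  by_cases h1 : LinearMap.ker B ≤ LinearMap.ker χ
  · left
    have hmem : χ ∈ LinearMap.range B.dualMap := by
      rw [LinearMap.range_dualMap_eq_dualAnnihilator_ker, Submodule.mem_dualAnnihilator]
      exact fun x hx => h1 hx
    obtain ⟨ξ, hξ⟩ := hmem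
    obtain ⟨w, rfl⟩ := (Module.evalEquiv K V).surjective ξ
    have hw : ∀ x, χ x = B x w := by intro x; rw [← hξ]; rfl
    obtain ⟨u, hu⟩ : ∃ u, χ u = 1 := by
      obtain ⟨u, hu⟩ : ∃ u, χ u ≠ 0 := by
        by_contra! hc; exact h0 (LinearMap.ext hc)
      exact ⟨(χ u)⁻¹ • u, by simp [hu]⟩
    have huw : B u w = 1 := by rw [← hw, hu]
    let U : Submodule K V := LinearMap.ker (B u) ⊓ LinearMap.ker (B w)
    obtain ⟨r, m, e, he⟩ := exists_std _ U (B.compl₁₂ U.subtype U.subtype) (fun v => hB _) rfl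
    obtain ⟨e', he', h'⟩ := hyp B hB u w huw r m e he
    refine ⟨r, m, e', he', fun x => ?_⟩
    change _ = ((e' x).1 0).1
    rw [h', hw]
  · right
    obtain ⟨u, hBu, hu⟩ : ∃ u, B u = 0 ∧ χ u = 1 := by
      obtain ⟨u, hu, hu'⟩ := SetLike.not_le_iff_exists.1 h1
      rw [LinearMap.mem_ker] at hu hu'
      exact ⟨(χ u)⁻¹ • u, by simp [hu], by simp [hu']⟩
    have hBu' : ∀ x, B x u = 0 := by intro x; rw [skew B hB, hBu]; simp
    let U : Submodule K V := LinearMap.ker χ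
    obtain ⟨r, m, e, he⟩ := exists_std _ U (B.compl₁₂ U.subtype U.subtype) (fun v => hB _) rfl
    let pU : V →ₗ[K] U := (LinearMap.id - χ.smulRight u).codRestrict _ (by
      intro x; simp [U, hu])
    have hpU : ∀ x, (pU x : V) = x - χ x • u := fun x => rfl
    let F : V →ₗ[K] M K r (m+1) :=
      { toFun := fun x => ((e (pU x)).1, Fin.cons (χ x) (e (pU x)).2)
        map_add' := by
          intro x y
          refine Prod.ext ?_ ?_
          · simp
          · funext i; refine Fin.cases ?_ (fun j => ?_) i <;> simp
        map_smul' := by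
          intro c x
          refine Prod.ext ?_ ?_
          · simp
          · funext i; refine Fin.cases ?_ (fun j => ?_) i <;> simp }
    have hF : ∀ x, F x = ((e (pU x)).1, Fin.cons (χ x) (e (pU x)).2) := fun x => rfl
    have hbij : Function.Bijective F := by
      constructor
      · rw [injective_iff_map_eq_zero]
        intro x hx
        rw [hF] at hx
        have h1 := congrFun (congrArg Prod.snd hx) 0
        have h2 : e (pU x) = 0 := by
          have hx2 := congrArg Prod.fst hx
          refine Prod.ext hx2 ?_
          funext j
          have := congrFun (congrArg Prod.snd hx) j.succ
          simpa using this
        have h3 : pU x = 0 := by simpa using h2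
        have h4 := hpU x
        rw [h3] at h4
        simp at h1
        simp [h1] at h4
        exact h4.symm
      · rintro ⟨f, g⟩
        let z := e.symm (f, Fin.tail g)
        have hz : χ z = 0 := z.2
        refine ⟨g 0 • u + z, ?_⟩
        have h1 : χ (g 0 • u + z) = g 0 := by simp [hu, hz]
        have h3 : pU (g 0 • u + z) = z := by
          apply Subtype.ext
          rw [hpU, h1]; abel
        rw [hF, h1, h3]
        simp only [z, LinearEquiv.apply_symm_apply]
        refine Prod.ext rfl ?_
        exact Fin.cons_self_tail g
    refine ⟨r, m, LinearEquiv.ofBijective F hbij, ?_, fun x => rfl⟩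
    intro x y
    have h : B (pU x) (pU y) = _ := he (pU x) (pU y)
    rw [hpU, hpU] at h
    simp only [map_sub, map_smul, LinearMap.sub_apply, LinearMap.smul_apply, hBu, hBu',
      LinearMap.zero_apply, smul_zero, sub_zero] at h
    rw [h]; rfl

end

section count
variable (K) (n : ℕ)

abbrev X : Type := ((Fin n → K) →ₗ[K] K) × {B : (Fin n → K) →ₗ[K] (Fin n → K) →ₗ[K] K // ∀ v, B v v = 0}

def R (x y : X K n) : Prop := ∃ φ : (Fin n → K) ≃ₗ[K] (Fin n → K),
        y.1 = x.1.comp φ.symm.toLinearMap ∧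
        (y.2 : (Fin n → K) →ₗ[K] (Fin n → K) →ₗ[K] K)
          = (x.2 : (Fin n → K) →ₗ[K] (Fin n → K) →ₗ[K] K).compl₁₂
              φ.symm.toLinearMap φ.symm.toLinearMap

variable {K n}

/-- Pull back a model along an equivalence. -/
def pull {r m : ℕ} (e : (Fin n → K) ≃ₗ[K] M K r m) (χ : M K r m →ₗ[K] K) : X K n :=
  (χ.comp e.toLinearMap, ⟨(std r m).compl₁₂ e.toLinearMap e.toLinearMap, fun _ => std_alt _ _ _⟩)

theorem pull_rel {r m : ℕ} (e e' : (Fin n → K) ≃ₗ[K] M K r m) (χ : M K r m →ₗ[K] K) :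
    R K n (pull e χ) (pull e' χ) := by
  refine ⟨e.trans e'.symm, ?_, ?_⟩
  · refine LinearMap.ext fun x => ?_
    simp [pull]
  · refine LinearMap.ext fun x => LinearMap.ext fun y => ?_
    simp [pull]

/-- the invariants -/
noncomputable def inv (x : X K n) : ℕ × Prop × Prop :=
  (Module.finrank K (LinearMap.ker x.2.1), x.1 = 0, ∀ v, x.2.1 v = 0 → x.1 v = 0)

theorem inv_aux {V W : Type} [AddCommGroup V] [Module K V] [AddCommGroup W] [Module K W]
    (e : V ≃ₗ[K] W) (χ : V →ₗ[K] K) (B : V →ₗ[K] V →ₗ[K] K) (χ' : W →ₗ[K] K)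
    (B' : W →ₗ[K] W →ₗ[K] K) (h1 : ∀ x, χ x = χ' (e x)) (h2 : ∀ x y, B x y = B' (e x) (e y)) :
    Module.finrank K (LinearMap.ker B) = Module.finrank K (LinearMap.ker B') ∧
    (χ = 0 ↔ χ' = 0) ∧ ((∀ v, B v = 0 → χ v = 0) ↔ (∀ v, B' v = 0 → χ' v = 0)) := by
  have hB : ∀ v, B v = 0 ↔ B' (e v) = 0 := by
    intro v
    constructor
    · intro h
      refine LinearMap.ext fun y => ?_
      obtain ⟨y, rfl⟩ := e.surjective y
      rw [← h2, h]; rfl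
    · intro h
      refine LinearMap.ext fun y => ?_
      rw [h2, h]; rfl
  refine ⟨?_, ?_, ?_⟩
  · have : LinearMap.ker B = (LinearMap.ker B').comap e.toLinearMap := by
      ext v; simpa using hB v
    rw [this]
    exact LinearEquiv.finrank_eq (e.ofSubmodule' (LinearMap.ker B'))
  · constructor
    · intro h
      refine LinearMap.ext fun y => ?_
      obtain ⟨y, rfl⟩ := e.surjective y
      rw [← h1, h]; rfl
    · intro h
      refine LinearMap.ext fun y => ?_
      rw [h1, h]; rfl
  · rw [e.surjective.forall]
    simp only [hB, h1]

theorem inv_rel (x y : X K n) (h : R K n x y) : inv x = inv y := by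
  obtain ⟨φ, h1, h2⟩ := h
  obtain ⟨a, b, c⟩ := inv_aux φ x.1 x.2.1 y.1 y.2.1 (by intro v; rw [h1]; simp)
    (by intro v w; rw [h2]; simp)
  exact Prod.ext a (Prod.ext (propext b) (propext c))

theorem inv_pull {r m : ℕ} (e : (Fin n → K) ≃ₗ[K] M K r m) (χ : M K r m →ₗ[K] K) :
    inv (pull e χ) = (m, χ = 0, ∀ v : M K r m, v.1 = 0 → χ v = 0) := by
  obtain ⟨a, b, c⟩ := inv_aux e (pull e χ).1 (pull e χ).2.1 χ (std r m) (fun _ => rfl)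
    (fun _ _ => rfl)
  rw [finrank_ker_std] at a
  refine Prod.ext a (Prod.ext (propext b) (propext (c.trans ?_)))
  exact forall_congr' fun v => imp_congr_left (by rw [← mem_ker_std]; rfl)

theorem chi1_ne (r m : ℕ) : chi1 (K := K) r m ≠ 0 := by
  intro h
  have := congrArg (fun f => f ((fun _ => (1, 0), 0) : M K (r+1) m)) h
  simp [chi1] at this

theorem chi2_ne (r m : ℕ) : ¬ ∀ v : M K r (m+1), v.1 = 0 → chi2 (K := K) r m v = 0 := by
  intro h
  have := h (0, fun _ => 1) rfl
  simp [chi2] at this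

theorem chi2_ne' (r m : ℕ) : chi2 (K := K) r m ≠ 0 := by
  intro h
  exact chi2_ne (K := K) r m (fun v _ => by rw [h]; rfl)

noncomputable def eqv (r m : ℕ) (h : 2 * r + m = n) : (Fin n → K) ≃ₗ[K] M K r m :=
  LinearEquiv.ofFinrankEq _ _ (by rw [finrank_M, h]; simp)

variable (K n) in
noncomputable def reps : Fin (n/2+1) ⊕ Fin (n/2) ⊕ Fin ((n+1)/2) → X K n
  | .inl k => pull (eqv k (n - 2 * k) (by omega)) 0
  | .inr (.inl k) => pull (eqv (k+1) (n - 2 * (k+1)) (by omega)) (chi1 _ _)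
  | .inr (.inr k) => pull (eqv k (n - 2 * k - 1 + 1) (by omega)) (chi2 _ _)

theorem reps_inj (i j) (h : inv (reps K n i) = inv (reps K n j)) : i = j := by
  have c1 : ∀ r m, ∀ v : M K (r+1) m, v.1 = 0 → chi1 (K := K) r m v = 0 := by
    intro r m v hv
    simp [chi1, hv]
  rcases i with i | i | i <;> rcases j with j | j | j <;>
    simp only [reps, inv_pull, Prod.mk.injEq, eq_iff_iff] at h <;>
    obtain ⟨h1, h2, h3⟩ := h
  · congr 1; ext; omega
  · exact absurd (h2.1 trivial) (chi1_ne _ _)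
  · exact absurd (h2.1 trivial) (chi2_ne' _ _)
  · exact absurd (h2.2 trivial) (chi1_ne _ _)
  · congr 2; ext; omega
  · exact absurd (h3.1 (c1 _ _)) (chi2_ne _ _)
  · exact absurd (h2.2 trivial) (chi2_ne' _ _)
  · exact absurd (h3.2 (c1 _ _)) (chi2_ne _ _)
  · congr 2; ext; omega

theorem eq_pull (x : X K n) {r m : ℕ} (e : (Fin n → K) ≃ₗ[K] M K r m) (χ : M K r m →ₗ[K] K)
    (h1 : ∀ v, x.1 v = χ (e v)) (h2 : ∀ v w, x.2.1 v w = std r m (e v) (e w)) : x = pull e χ :=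
  Prod.ext (LinearMap.ext h1) (Subtype.ext (LinearMap.ext fun v => LinearMap.ext fun w => h2 v w))

theorem dim_eq {r m : ℕ} (e : (Fin n → K) ≃ₗ[K] M K r m) : 2 * r + m = n := by
  have := e.finrank_eq
  rw [finrank_M] at this
  simpa using this.symm

theorem reps_surj (x : X K n) : ∃ i, R K n (reps K n i) x := by
  rcases exists_nf x.2.1 x.2.2 x.1 with ⟨r, m, e, he, h0⟩ | ⟨r, m, e, he, hχ⟩ | ⟨r, m, e, he, hχ⟩
  · have hd := dim_eq e
    obtain rfl : m = n - 2 * r := by omega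
    refine ⟨.inl ⟨r, by omega⟩, ?_⟩
    rw [eq_pull x e 0 (by simp [h0]) he]
    exact pull_rel _ _ _
  · have hd := dim_eq e
    obtain rfl : m = n - 2 * (r + 1) := by omega
    refine ⟨.inr (.inl ⟨r, by omega⟩), ?_⟩
    rw [eq_pull x e _ hχ he]
    exact pull_rel _ _ _
  · have hd := dim_eq e
    obtain rfl : m = n - 2 * r - 1 := by omega
    refine ⟨.inr (.inr ⟨r, by omega⟩), ?_⟩
    rw [eq_pull x e _ hχ he]
    exact pull_rel _ _ _

variable (K n) in
theorem card_quot : Nat.card (Quot (R K n)) = (3 * n + 2) / 2 := by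
  have hbij : Function.Bijective (fun i => Quot.mk (R K n) (reps K n i)) := by
    constructor
    · intro i j h
      exact reps_inj i j (congrArg (Quot.lift inv inv_rel) h)
    · intro q
      induction q using Quot.ind with
      | _ x =>
        obtain ⟨i, hi⟩ := reps_surj x
        exact ⟨i, Quot.sound hi⟩
  rw [← Nat.card_congr (Equiv.ofBijective _ hbij)]
  simp only [Nat.card_eq_fintype_card, Fintype.card_sum, Fintype.card_fin]
  obtain ⟨k, rfl | rfl⟩ := Nat.even_or_odd' n <;> omega

end count

end Orb


/-- for `G` elementary abelian of order `p^n` (`p` odd), the number of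
orbits of `GL_n(𝔽_p)` acting diagonally on `Ĝ ⊕ Alt(G)` (linear functionals paired
with alternating bilinear forms, acted on by `χ.φ = χ∘φ⁻¹`, `β.φ = β(φ⁻¹·, φ⁻¹·)`)
equals `⌊(3n+2)/2⌋`. -/
theorem stmt13 (p n : ℕ) [Fact p.Prime] (hp2 : p ≠ 2) :
    Nat.card (Quot (fun (x y : ((Fin n → ZMod p) →ₗ[ZMod p] ZMod p) ×
        {B : (Fin n → ZMod p) →ₗ[ZMod p] (Fin n → ZMod p) →ₗ[ZMod p] ZMod p //
          ∀ v, B v v = 0}) =>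
      ∃ φ : (Fin n → ZMod p) ≃ₗ[ZMod p] (Fin n → ZMod p),
        y.1 = x.1.comp φ.symm.toLinearMap ∧
        (y.2 : (Fin n → ZMod p) →ₗ[ZMod p] (Fin n → ZMod p) →ₗ[ZMod p] ZMod p)
          = (x.2 : (Fin n → ZMod p) →ₗ[ZMod p] (Fin n → ZMod p) →ₗ[ZMod p] ZMod p).compl₁₂
              φ.symm.toLinearMap φ.symm.toLinearMap))
      = (3 * n + 2) / 2 := by
  exact Orb.card_quot (ZMod p) n
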